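/- (Proposition 2: bounds on the relative efficiency.) Let g* be a probability density on ℝ with ∫ e^w g*(w) dw = 1. Let W* have density g*, let W be independent of W* with density e^w g*(w), and set B = W* − W. Fix ℓ > 0 and let V be Gaussian with mean −ℓ²/2 and variance ℓ², independent of (W, W*). Define J_rel(ℓ) = E[Φ(B/ℓ − ℓ/2)] / Φ(−ℓ/2) and α_max = 2·P(B > 0), where Φ is the standard normal cumulative distribution function. Then α_max ≤ J_rel(ℓ) ≤ 1; equivalently, E[min(1, e^V)] · E[min(1, e^B)] ≤ E[min(1, exp(V + B))] ≤ E[min(1, e^V)] = 2·Φ(−ℓ/2), and E[min(1, e^B)] = 2·P(B > 0). -/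

import Mathlib

open MeasureTheory ProbabilityTheory Real

/-- The standard normal cumulative distribution function `Φ`. -/
noncomputable def stdNormalCDF (x : ℝ) : ℝ :=
  ∫ t in Set.Iic x, Real.exp (-t ^ 2 / 2) / Real.sqrt (2 * Real.pi)

/-!
The laws of `V` and of `B` share one symmetry: reflecting the law through `0` multiplies it by the
density `exp`. This symmetry is inherited by sums of independent variables, hence holds for
`V + B`. For a variable `X` with this symmetry and no atom at `0`, the part of `E[min(1, exp X)]`
over `X < 0` is `E[exp X; X < 0] = P(X > 0)`, so `E[min(1, exp X)] = 2 P(X > 0)`. Conditioning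
on `B` turns `P(V + B > 0)` into `E[Φ(B/ℓ - ℓ/2)]`, so `J_rel(ℓ)` is a quotient of two expectations
of `min(1, exp ·)`. The lower bound is then `min(1, x) min(1, y) ≤ min(1, xy)`, and the upper bound
is Jensen's inequality conditionally on `V`, since the symmetry gives `E[exp B] = 1`.
-/

section Measures

variable {α β γ : Type*} [MeasurableSpace α] [MeasurableSpace β] [MeasurableSpace γ]

lemma withDensity_map {μ : Measure α} {f : α → β} (hf : Measurable f) {h : β → ENNReal}
    (hh : Measurable h) : (μ.map f).withDensity h = (μ.withDensity (h ∘ f)).map f := by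
  ext s hs
  rw [withDensity_apply _ hs, Measure.map_apply hf hs, withDensity_apply _ (hf hs),
    setLIntegral_map hs hh hf]
  rfl

lemma withDensity_ofReal_mul {μ : Measure α} {f h : α → ℝ} (hf : Measurable f)
    (hf_nonneg : ∀ x, 0 ≤ f x) (hh : Measurable h) :
    (μ.withDensity fun x => ENNReal.ofReal (f x * h x)) =
      (μ.withDensity fun x => ENNReal.ofReal (h x)).withDensity
        fun x => ENNReal.ofReal (f x) := by
  rw [← withDensity_mul _ (by fun_prop) (by fun_prop)]
  congr with x
  rw [Pi.mul_apply, mul_comm, ENNReal.ofReal_mul' (hf_nonneg x)]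

lemma nullSingletonClass_map_prod {μ : Measure α} {ν : Measure β} [SFinite ν]
    [NullSingletonClass ν] [MeasurableSingletonClass γ] {f : α × β → γ} (hf : Measurable f)
    (hf_inj : ∀ x, Function.Injective fun y => f (x, y)) :
    NullSingletonClass ((μ.prod ν).map f) := by
  refine ⟨fun c => ?_⟩
  have hc : MeasurableSet (f ⁻¹' {c}) := hf (measurableSet_singleton c)
  rw [Measure.map_apply hf (measurableSet_singleton c), Measure.measure_prod_null hc]
  refine Filter.Eventually.of_forall fun x => ?_
  exact (Set.subsingleton_singleton.preimage (hf_inj x)).measure_zero ν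

lemma measureReal_conv {M : Type*} [AddMonoid M] [MeasurableSpace M] [MeasurableAdd₂ M]
    (μ ν : Measure M) [IsFiniteMeasure μ] [IsFiniteMeasure ν] {s : Set M}
    (hs : MeasurableSet s) :
    (μ ∗ ν).real s = ∫ x, ν.real ((x + ·) ⁻¹' s) ∂μ := by
  have hs_int : Integrable (s.indicator (1 : M → ℝ)) (μ ∗ ν) :=
    (integrable_const 1).indicator hs
  rw [← integral_indicator_one hs, integral_conv hs_int]
  refine integral_congr_ae (.of_forall fun x => ?_)
  exact integral_indicator_one (hs.preimage (measurable_const_add x))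

lemma integral_prod_add_comp {M E : Type*} [AddMonoid M] [MeasurableSpace M] [MeasurableAdd₂ M]
    [NormedAddCommGroup E] [NormedSpace ℝ E] {μ : Measure M} {P : Measure α} [SFinite μ]
    [SFinite P] {X : α → M} (hX : Measurable X) {f : M → E}
    (hf : AEStronglyMeasurable f (μ ∗ P.map X)) :
    ∫ q, f (q.1 + X q.2) ∂(μ.prod P) = ∫ z, f z ∂(μ ∗ P.map X) := by
  have h_law : μ ∗ P.map X = (μ.prod P).map fun q => q.1 + X q.2 := by
    conv_lhs => rw [Measure.conv, ← Measure.map_id (μ := μ),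
      Measure.map_prod_map _ _ measurable_id hX, Measure.map_map (by fun_prop) (by fun_prop)]
    rfl
  rw [h_law] at hf ⊢
  exact (integral_map (by fun_prop) hf).symm

end Measures

section MinOneExp

lemma min_one_exp_mul_le (x y : ℝ) : min 1 (exp x) * min 1 (exp y) ≤ min 1 (exp (x + y)) := by
  have hy : 0 ≤ min 1 (exp y) := by positivity
  rw [exp_add]
  exact le_min (mul_le_one₀ (min_le_left _ _) hy (min_le_left _ _))
    (mul_le_mul (min_le_right _ _) (min_le_right _ _) hy (exp_pos x).le)

variable {Ω : Type*} [MeasurableSpace Ω]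

lemma integrable_min_one_exp {P : Measure Ω} [IsFiniteMeasure P] {X : Ω → ℝ}
    (hX : Measurable X) : Integrable (fun ω => min 1 (exp (X ω))) P := by
  refine .of_bound (by fun_prop) 1 (.of_forall fun ω => ?_)
  rw [norm_of_nonneg (by positivity)]
  exact min_le_left _ _

variable (μ ν : Measure ℝ) [IsFiniteMeasure μ]

lemma integral_min_one_exp_mul_le_conv [IsFiniteMeasure ν] :
    (∫ x, min 1 (exp x) ∂μ) * ∫ y, min 1 (exp y) ∂ν ≤ ∫ z, min 1 (exp z) ∂(μ ∗ ν) := by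
  rw [← integral_prod_mul, Measure.conv, integral_map (by fun_prop) (by fun_prop)]
  exact integral_mono
    ((integrable_min_one_exp measurable_id).mul_prod (integrable_min_one_exp measurable_id))
    (integrable_min_one_exp measurable_add) fun z => min_one_exp_mul_le z.1 z.2

-- Jensen's inequality for the concave function `t ↦ min 1 (exp x * t)`, done by hand.
lemma integral_min_one_exp_add_le [IsProbabilityMeasure ν] (hν : Integrable exp ν)
    (hν_le : ∫ y, exp y ∂ν ≤ 1) (x : ℝ) :
    ∫ y, min 1 (exp (x + y)) ∂ν ≤ min 1 (exp x) := by
  have h_int : Integrable (fun y => min 1 (exp (x + y))) ν :=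
    integrable_min_one_exp (measurable_const_add x)
  refine le_min ?_ ?_
  · calc ∫ y, min 1 (exp (x + y)) ∂ν ≤ ∫ _, 1 ∂ν :=
          integral_mono h_int (integrable_const 1) fun y => min_le_left _ _
      _ = 1 := by simp
  · calc ∫ y, min 1 (exp (x + y)) ∂ν ≤ ∫ y, exp x * exp y ∂ν :=
          integral_mono h_int (hν.const_mul _) fun y => (min_le_right _ _).trans_eq (exp_add x y)
      _ = exp x * ∫ y, exp y ∂ν := integral_const_mul _ _
      _ ≤ exp x := mul_le_of_le_one_right (exp_pos x).le hν_le

lemma integral_min_one_exp_conv_le [IsProbabilityMeasure ν] (hν : Integrable exp ν)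
    (hν_le : ∫ y, exp y ∂ν ≤ 1) :
    ∫ z, min 1 (exp z) ∂(μ ∗ ν) ≤ ∫ x, min 1 (exp x) ∂μ := by
  have h_conv : Integrable (fun z => min 1 (exp z)) (μ ∗ ν) :=
    integrable_min_one_exp measurable_id
  have h_prod : Integrable (fun z : ℝ × ℝ => min 1 (exp (z.1 + z.2))) (μ.prod ν) :=
    integrable_min_one_exp measurable_add
  rw [integral_conv h_conv]
  exact integral_mono h_prod.integral_prod_left (integrable_min_one_exp measurable_id)
    (integral_min_one_exp_add_le ν hν hν_le)

end MinOneExp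

/-- A measure `ν` on `ℝ` is exponentially balanced if its reflection has density `exp` with
respect to `ν`. For `ν` with density `ρ` this is the detailed balance relation
`ρ (-b) = exp b * ρ b`; stating it for measures also covers laws without a density. -/
def IsExpBalanced (ν : Measure ℝ) : Prop :=
  ν.map Neg.neg = ν.withDensity fun b => ENNReal.ofReal (exp b)

namespace IsExpBalanced

variable {μ ν : Measure ℝ}

lemma conv [SFinite μ] [SFinite ν] (hμ : IsExpBalanced μ) (hν : IsExpBalanced ν) :
    IsExpBalanced (μ ∗ ν) := by
  have h_neg : (μ ∗ ν).map Neg.neg = μ.map Neg.neg ∗ ν.map Neg.neg :=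
    Measure.map_conv_addMonoidHom negAddMonoidHom measurable_neg
  rw [IsExpBalanced, h_neg, hμ, hν, Measure.conv, Measure.conv,
    prod_withDensity (by fun_prop) (by fun_prop), withDensity_map measurable_add (by fun_prop)]
  congr 2 with z
  rw [Function.comp_apply, exp_add, ENNReal.ofReal_mul (exp_pos _).le]

lemma setLIntegral_exp (hν : IsExpBalanced ν) {s : Set ℝ} (hs : MeasurableSet s) :
    ∫⁻ b in s, ENNReal.ofReal (exp b) ∂ν = ν (Neg.neg ⁻¹' s) := by
  rw [← withDensity_apply _ hs, ← hν, Measure.map_apply measurable_neg hs]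

lemma integrable_exp [IsFiniteMeasure ν] (hν : IsExpBalanced ν) : Integrable exp ν := by
  refine ⟨by fun_prop, ?_⟩
  rw [hasFiniteIntegral_iff_ofReal (.of_forall fun b => (exp_pos b).le), ← setLIntegral_univ,
    hν.setLIntegral_exp .univ]
  exact measure_lt_top _ _

lemma setIntegral_exp (hν : IsExpBalanced ν) {s : Set ℝ} (hs : MeasurableSet s) :
    ∫ b in s, exp b ∂ν = ν.real (Neg.neg ⁻¹' s) := by
  rw [integral_eq_lintegral_of_nonneg_ae (.of_forall fun b => (exp_pos b).le) (by fun_prop),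
    hν.setLIntegral_exp hs, measureReal_def]

lemma integral_exp [IsProbabilityMeasure ν] (hν : IsExpBalanced ν) : ∫ b, exp b ∂ν = 1 := by
  rw [← setIntegral_univ, hν.setIntegral_exp .univ, Set.preimage_univ, probReal_univ]

lemma integral_min_one_exp [IsFiniteMeasure ν] (hν : IsExpBalanced ν) :
    ∫ b, min 1 (exp b) ∂ν = ν.real (Set.Ici 0) + ν.real (Set.Ioi 0) := by
  have h_Ici : ∫ b in Set.Ici 0, min 1 (exp b) ∂ν = ν.real (Set.Ici 0) := by
    rw [setIntegral_congr_fun measurableSet_Ici fun b hb => min_eq_left (one_le_exp hb)]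
    simp
  have h_Iio : ∫ b in Set.Iio 0, min 1 (exp b) ∂ν = ν.real (Set.Ioi 0) := by
    rw [setIntegral_congr_fun measurableSet_Iio fun b hb => min_eq_right (exp_le_one_iff.2 hb.le),
      hν.setIntegral_exp measurableSet_Iio]
    simp
  have h_int : Integrable (fun b => min 1 (exp b)) ν := integrable_min_one_exp measurable_id
  rw [← integral_add_compl measurableSet_Ici h_int, Set.compl_Ici, h_Ici, h_Iio]

lemma integral_min_one_exp_of_zero [IsFiniteMeasure ν] (hν : IsExpBalanced ν)
    (h_zero : ν {0} = 0) : ∫ b, min 1 (exp b) ∂ν = 2 * ν.real (Set.Ioi 0) := by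
  rw [hν.integral_min_one_exp, ← measureReal_congr (Ioi_ae_eq_Ici' h_zero), two_mul]

end IsExpBalanced

-- The pair has density `exp w` with respect to `μ ⊗ μ`; the further factor `exp (w' - w)` turns
-- this into `exp w'`, which is the density of the pair with its coordinates swapped.
lemma isExpBalanced_map_sub (μ : Measure ℝ) [SFinite μ] :
    IsExpBalanced (((μ.withDensity fun w => ENNReal.ofReal (exp w)).prod μ).map
      fun p => p.2 - p.1) := by
  have h_swap : (μ.prod μ).withDensity (fun p => ENNReal.ofReal (exp p.1)) =
      ((μ.prod μ).withDensity fun p => ENNReal.ofReal (exp p.2)).map Prod.swap := by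
    conv_lhs => rw [← Measure.prod_swap]
    exact withDensity_map measurable_swap (by fun_prop)
  rw [IsExpBalanced, withDensity_map (by fun_prop) (by fun_prop),
    Measure.map_map measurable_neg (by fun_prop), prod_withDensity_left (by fun_prop),
    ← withDensity_mul _ (by fun_prop) (by fun_prop), h_swap,
    Measure.map_map (by fun_prop) measurable_swap]
  congr 2 with p
  · simp
  · simp [← ENNReal.ofReal_mul (exp_pos _).le, ← exp_add]

lemma isExpBalanced_map_sub_withDensity {μ : Measure ℝ} [SFinite μ] {g : ℝ → ℝ}
    (hg : Measurable g) :
    IsExpBalanced (((μ.withDensity fun w => ENNReal.ofReal (exp w * g w)).prod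
      (μ.withDensity fun w => ENNReal.ofReal (g w))).map fun p => p.2 - p.1) := by
  rw [withDensity_ofReal_mul measurable_exp (fun w => (exp_pos w).le) hg]
  exact isExpBalanced_map_sub _

lemma isExpBalanced_gaussianReal (v : NNReal) : IsExpBalanced (gaussianReal (-v / 2) v) := by
  refine gaussianReal_map_neg.trans ?_
  obtain rfl | hv := eq_or_ne v 0
  · simp [dirac_withDensity]
  · rw [gaussianReal_of_var_ne_zero _ hv, gaussianReal_of_var_ne_zero _ hv,
      ← withDensity_mul _ (measurable_gaussianPDF _ _) (by fun_prop)]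
    congr with x
    have h_exponent : -(x - -(-v / 2)) ^ 2 / (2 * v) = -(x - -v / 2) ^ 2 / (2 * v) + x := by
      field_simp
      ring
    rw [Pi.mul_apply, gaussianPDF, gaussianPDF, ← ENNReal.ofReal_mul (gaussianPDFReal_nonneg _ _ _),
      gaussianPDFReal, gaussianPDFReal, h_exponent, exp_add, mul_assoc _ _ (exp x)]

section StdNormalCDF

lemma stdNormalCDF_eq_cdf (x : ℝ) : stdNormalCDF x = cdf (gaussianReal 0 1) x := by
  rw [cdf_eq_real, measureReal_def, gaussianReal_apply_eq_integral _ one_ne_zero,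
    ENNReal.toReal_ofReal (integral_nonneg fun t => gaussianPDFReal_nonneg _ _ _), stdNormalCDF]
  congr with t
  simp [gaussianPDFReal, div_eq_inv_mul]

lemma measurable_stdNormalCDF : Measurable stdNormalCDF := by
  rw [funext stdNormalCDF_eq_cdf]
  exact (monotone_cdf _).measurable

lemma stdNormalCDF_pos (x : ℝ) : 0 < stdNormalCDF x := by
  have h_null : gaussianReal 0 1 (Set.Iic x) ≠ 0 := fun h => by
    simpa using gaussianReal_absolutelyContinuous' 0 one_ne_zero h
  rw [stdNormalCDF_eq_cdf, cdf_eq_real]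
  exact ENNReal.toReal_pos h_null (measure_ne_top _ _)

lemma gaussianReal_eq_map_sub_mul (m σ : ℝ) :
    gaussianReal m (.mk (σ ^ 2) (sq_nonneg σ)) = (gaussianReal 0 1).map fun x => m - σ * x := by
  have h_comp : (fun x => m - σ * x) = (m + ·) ∘ (-σ * ·) := by
    ext x
    simp [sub_eq_add_neg]
  rw [h_comp, ← Measure.map_map (by fun_prop) (by fun_prop), gaussianReal_map_const_mul,
    gaussianReal_map_const_add]
  congr 1
  · simp
  · ext
    simp

lemma measureReal_gaussianReal_Ioi {σ : ℝ} (hσ : 0 < σ) (m a : ℝ) :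
    (gaussianReal m (.mk (σ ^ 2) (sq_nonneg σ))).real (Set.Ioi a) = stdNormalCDF ((m - a) / σ) := by
  have h_preimage : (fun x => m - σ * x) ⁻¹' Set.Ioi a = Set.Iio ((m - a) / σ) := by
    ext x
    rw [Set.mem_preimage, Set.mem_Ioi, Set.mem_Iio, lt_div_iff₀' hσ, lt_sub_comm]
  have := nullSingletonClass_gaussianReal (μ := 0) one_ne_zero
  rw [gaussianReal_eq_map_sub_mul, map_measureReal_apply (by fun_prop) measurableSet_Ioi,
    h_preimage, stdNormalCDF_eq_cdf, cdf_eq_real, measureReal_congr Iio_ae_eq_Iic]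

end StdNormalCDF

/-- The law `N(-ℓ²/2, ℓ²)` of `V`, the limiting log acceptance ratio of random walk Metropolis
with scaling parameter `ℓ` when the target density is known exactly. -/
noncomputable abbrev limitLogRatioLaw (ℓ : ℝ) : Measure ℝ :=
  gaussianReal (-ℓ ^ 2 / 2) (.mk (ℓ ^ 2) (sq_nonneg ℓ))

lemma isExpBalanced_limitLogRatioLaw (ℓ : ℝ) : IsExpBalanced (limitLogRatioLaw ℓ) :=
  isExpBalanced_gaussianReal _

section Acceptance

variable {ℓ : ℝ}

lemma nullSingletonClass_limitLogRatioLaw (hℓ : 0 < ℓ) :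
    NullSingletonClass (limitLogRatioLaw ℓ) :=
  nullSingletonClass_gaussianReal (NNReal.coe_ne_zero.1 (pow_pos hℓ 2).ne')

lemma measureReal_limitLogRatioLaw_Ioi (hℓ : 0 < ℓ) (b : ℝ) :
    (limitLogRatioLaw ℓ).real (Set.Ioi (-b)) = stdNormalCDF (b / ℓ - ℓ / 2) := by
  rw [measureReal_gaussianReal_Ioi hℓ]
  congr 1
  field_simp
  ring

lemma integral_min_one_exp_limitLogRatioLaw (hℓ : 0 < ℓ) :
    ∫ v, min 1 (exp v) ∂(limitLogRatioLaw ℓ) = 2 * stdNormalCDF (-ℓ / 2) := by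
  have := nullSingletonClass_limitLogRatioLaw hℓ
  have h_tail : (limitLogRatioLaw ℓ).real (Set.Ioi 0) = stdNormalCDF (-ℓ / 2) := by
    simpa [neg_div] using measureReal_limitLogRatioLaw_Ioi hℓ 0
  rw [(isExpBalanced_limitLogRatioLaw ℓ).integral_min_one_exp_of_zero (measure_singleton 0), h_tail]

lemma integral_min_one_exp_limitLogRatioLaw_pos (hℓ : 0 < ℓ) :
    0 < ∫ v, min 1 (exp v) ∂(limitLogRatioLaw ℓ) := by
  rw [integral_min_one_exp_limitLogRatioLaw hℓ]
  exact mul_pos two_pos (stdNormalCDF_pos _)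

variable {ν : Measure ℝ}

lemma integral_min_one_exp_limitLogRatioLaw_conv [IsFiniteMeasure ν] (hℓ : 0 < ℓ)
    (hν : IsExpBalanced ν) :
    ∫ z, min 1 (exp z) ∂(limitLogRatioLaw ℓ ∗ ν) =
      2 * ∫ b, stdNormalCDF (b / ℓ - ℓ / 2) ∂ν := by
  have h_bal : IsExpBalanced (ν ∗ limitLogRatioLaw ℓ) :=
    hν.conv (isExpBalanced_limitLogRatioLaw ℓ)
  have := nullSingletonClass_limitLogRatioLaw hℓ
  have : NullSingletonClass (ν ∗ limitLogRatioLaw ℓ) :=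
    nullSingletonClass_map_prod measurable_add add_right_injective
  rw [Measure.conv_comm, h_bal.integral_min_one_exp_of_zero (measure_singleton 0),
    measureReal_conv _ _ measurableSet_Ioi]
  simp only [Set.preimage_const_add_Ioi, zero_sub, measureReal_limitLogRatioLaw_Ioi hℓ]

lemma integral_stdNormalCDF_div_eq [IsFiniteMeasure ν] (hℓ : 0 < ℓ) (hν : IsExpBalanced ν) :
    (∫ b, stdNormalCDF (b / ℓ - ℓ / 2) ∂ν) / stdNormalCDF (-ℓ / 2) =
      (∫ z, min 1 (exp z) ∂(limitLogRatioLaw ℓ ∗ ν)) /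
        ∫ v, min 1 (exp v) ∂(limitLogRatioLaw ℓ) := by
  rw [integral_min_one_exp_limitLogRatioLaw_conv hℓ hν, integral_min_one_exp_limitLogRatioLaw hℓ,
    mul_div_mul_left _ _ two_ne_zero]

lemma integral_min_one_exp_le_integral_stdNormalCDF_div [IsFiniteMeasure ν] (hℓ : 0 < ℓ)
    (hν : IsExpBalanced ν) :
    ∫ b, min 1 (exp b) ∂ν ≤
      (∫ b, stdNormalCDF (b / ℓ - ℓ / 2) ∂ν) / stdNormalCDF (-ℓ / 2) := by
  rw [integral_stdNormalCDF_div_eq hℓ hν,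
    le_div_iff₀' (integral_min_one_exp_limitLogRatioLaw_pos hℓ)]
  exact integral_min_one_exp_mul_le_conv _ _

lemma integral_stdNormalCDF_div_le_one [IsProbabilityMeasure ν] (hℓ : 0 < ℓ)
    (hν : IsExpBalanced ν) :
    (∫ b, stdNormalCDF (b / ℓ - ℓ / 2) ∂ν) / stdNormalCDF (-ℓ / 2) ≤ 1 := by
  rw [integral_stdNormalCDF_div_eq hℓ hν,
    div_le_one (integral_min_one_exp_limitLogRatioLaw_pos hℓ)]
  exact integral_min_one_exp_conv_le _ _ hν.integrable_exp hν.integral_exp.le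

end Acceptance

theorem stmt9_general {Ω : Type*} [MeasurableSpace Ω] {P : Measure Ω} [IsProbabilityMeasure P]
    {ℓ : ℝ} (hℓ : 0 < ℓ) {B : Ω → ℝ} (hB : Measurable B) (hB_bal : IsExpBalanced (P.map B))
    (hB_zero : P.map B {0} = 0) :
    (∫ v, min 1 (exp v) ∂(limitLogRatioLaw ℓ)) * ∫ ω, min 1 (exp (B ω)) ∂P ≤
        ∫ q, min 1 (exp (q.1 + B q.2)) ∂((limitLogRatioLaw ℓ).prod P) ∧
      ∫ q, min 1 (exp (q.1 + B q.2)) ∂((limitLogRatioLaw ℓ).prod P) ≤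
        ∫ v, min 1 (exp v) ∂(limitLogRatioLaw ℓ) ∧
      ∫ v, min 1 (exp v) ∂(limitLogRatioLaw ℓ) = 2 * stdNormalCDF (-ℓ / 2) ∧
      ∫ ω, min 1 (exp (B ω)) ∂P = 2 * P.real {ω | 0 < B ω} ∧
      2 * P.real {ω | 0 < B ω} ≤
        (∫ ω, stdNormalCDF (B ω / ℓ - ℓ / 2) ∂P) / stdNormalCDF (-ℓ / 2) ∧
      (∫ ω, stdNormalCDF (B ω / ℓ - ℓ / 2) ∂P) / stdNormalCDF (-ℓ / 2) ≤ 1 := by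
  have : IsProbabilityMeasure (P.map B) := Measure.isProbabilityMeasure_map hB.aemeasurable
  have h_cdf : Measurable fun b => stdNormalCDF (b / ℓ - ℓ / 2) :=
    measurable_stdNormalCDF.comp (by fun_prop)
  have h_B := integral_map hB.aemeasurable (μ := P) (f := fun b => min 1 (exp b)) (by fun_prop)
  have h_J := integral_map hB.aemeasurable (μ := P) h_cdf.aestronglyMeasurable
  have h_VB := integral_prod_add_comp (μ := limitLogRatioLaw ℓ) (P := P) hB
    (f := fun z => min 1 (exp z)) (by fun_prop)
  have h_pos : (P.map B).real (Set.Ioi 0) = P.real {ω | 0 < B ω} :=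
    map_measureReal_apply hB measurableSet_Ioi
  have h_alpha := hB_bal.integral_min_one_exp_of_zero hB_zero
  rw [h_VB, ← h_B, ← h_J, ← h_pos]
  exact ⟨integral_min_one_exp_mul_le_conv _ _,
    integral_min_one_exp_conv_le _ _ hB_bal.integrable_exp hB_bal.integral_exp.le,
    integral_min_one_exp_limitLogRatioLaw hℓ, h_alpha,
    h_alpha ▸ integral_min_one_exp_le_integral_stdNormalCDF_div hℓ hB_bal,
    integral_stdNormalCDF_div_le_one hℓ hB_bal⟩

/-- Proposition 2: bounds on the relative efficiency.  With `W*` of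
density `g*`, `W` of density `e^w g*(w)` independent, `B = W* − W`, and
`V ∼ N(−ℓ²/2, ℓ²)` independent of `(W, W*)`:
`E[min(1,e^V)] E[min(1,e^B)] ≤ E[min(1,exp(V+B))] ≤ E[min(1,e^V)] = 2Φ(−ℓ/2)`,
`E[min(1,e^B)] = 2 P(B > 0)`, and hence `α_max ≤ J_rel(ℓ) ≤ 1`. -/
theorem stmt9 (ℓ : ℝ) (hℓ : 0 < ℓ)
    (g : ℝ → ℝ) (hg_meas : Measurable g) (hg_nonneg : ∀ w, 0 ≤ g w)
    (μWs μW : Measure ℝ)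
    (hμWs : μWs = volume.withDensity fun w => ENNReal.ofReal (g w))
    (hμW : μW = volume.withDensity fun w => ENNReal.ofReal (Real.exp w * g w))
    (hμWs_prob : IsProbabilityMeasure μWs) (hμW_prob : IsProbabilityMeasure μW)
    (μV : Measure ℝ) (hμV : μV = gaussianReal (-ℓ ^ 2 / 2) ⟨ℓ ^ 2, sq_nonneg ℓ⟩) :
    -- lower bound: E[min(1,e^V)]·E[min(1,e^B)] ≤ E[min(1,exp(V+B))]
    ((∫ v, min 1 (Real.exp v) ∂μV) *
        ∫ p : ℝ × ℝ, min 1 (Real.exp (p.2 - p.1)) ∂(μW.prod μWs)) ≤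
      (∫ q : ℝ × (ℝ × ℝ), min 1 (Real.exp (q.1 + (q.2.2 - q.2.1)))
        ∂(μV.prod (μW.prod μWs))) ∧
    -- upper bound: E[min(1,exp(V+B))] ≤ E[min(1,e^V)]
    (∫ q : ℝ × (ℝ × ℝ), min 1 (Real.exp (q.1 + (q.2.2 - q.2.1)))
        ∂(μV.prod (μW.prod μWs))) ≤ (∫ v, min 1 (Real.exp v) ∂μV) ∧
    -- E[min(1,e^V)] = 2Φ(−ℓ/2)
    (∫ v, min 1 (Real.exp v) ∂μV) = 2 * stdNormalCDF (-ℓ / 2) ∧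
    -- E[min(1,e^B)] = 2 P(B > 0)
    (∫ p : ℝ × ℝ, min 1 (Real.exp (p.2 - p.1)) ∂(μW.prod μWs)) =
      2 * ((μW.prod μWs) {p : ℝ × ℝ | 0 < p.2 - p.1}).toReal ∧
    -- α_max ≤ J_rel(ℓ) ≤ 1
    (2 * ((μW.prod μWs) {p : ℝ × ℝ | 0 < p.2 - p.1}).toReal ≤
        (∫ p : ℝ × ℝ, stdNormalCDF ((p.2 - p.1) / ℓ - ℓ / 2) ∂(μW.prod μWs)) /
          stdNormalCDF (-ℓ / 2) ∧
      (∫ p : ℝ × ℝ, stdNormalCDF ((p.2 - p.1) / ℓ - ℓ / 2) ∂(μW.prod μWs)) /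
          stdNormalCDF (-ℓ / 2) ≤ 1) := by
  subst hμWs hμW hμV
  have h_sub : Measurable fun p : ℝ × ℝ => p.2 - p.1 := by fun_prop
  exact stmt9_general hℓ h_sub (isExpBalanced_map_sub_withDensity hg_meas)
    ((nullSingletonClass_map_prod h_sub fun _ => sub_left_injective).measure_singleton 0)
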